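/- Fix σ ∈ [0,1), μ > 0, λ > 0. Suppose x, y, v ∈ X, ε ≥ 0 satisfy v ∈ A(y) + B^{[ε]}(y) and ‖λv + y - x‖² + 2λε ≤ σ²‖y - x‖², where A is μ-strongly maximal monotone and B is maximal monotone, and set x₊ := x - λv. Then for every x* ∈ (A+B)⁻¹(0): ‖x* - x‖² ≥ 2λμ‖x* - y‖² + (1-σ²)‖y - x‖² + ‖x* - x₊‖². -/

import Mathlib

open RealInnerProductSpace Pointwise

def IsStronglyMonotoneOp {X : Type*} [NormedAddCommGroup X] [InnerProductSpace ℝ X]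
    (μ : ℝ) (A : X → Set X) : Prop :=
  ∀ ⦃x v x' v' : X⦄, v ∈ A x → v' ∈ A x' → μ * ‖x - x'‖ ^ 2 ≤ ⟪v - v', x - x'⟫

def IsMonotoneOp {X : Type*} [NormedAddCommGroup X] [InnerProductSpace ℝ X]
    (A : X → Set X) : Prop :=
  ∀ ⦃x v x' v' : X⦄, v ∈ A x → v' ∈ A x' → 0 ≤ ⟪v - v', x - x'⟫

def IsMaximalMonotone {X : Type*} [NormedAddCommGroup X] [InnerProductSpace ℝ X]
    (A : X → Set X) : Prop :=
  IsMonotoneOp A ∧ ∀ B : X → Set X, IsMonotoneOp B → (∀ x, A x ⊆ B x) → A = B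

def enl {X : Type*} [NormedAddCommGroup X] [InnerProductSpace ℝ X]
    (T : X → Set X) (ε : ℝ) (x : X) : Set X :=
  {v : X | ∀ x' v' : X, v' ∈ T x' → -ε ≤ ⟪v - v', x - x'⟫}

theorem stmt8 {X : Type*} [NormedAddCommGroup X] [InnerProductSpace ℝ X]
    (σ μ lam : ℝ) (hσ0 : 0 ≤ σ) (hσ1 : σ < 1) (hμ : 0 < μ) (hlam : 0 < lam)
    (A B : X → Set X) (hA : IsStronglyMonotoneOp μ A) (hAmax : IsMaximalMonotone A)
    (hB : IsMaximalMonotone B)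
    (x y v : X) (ε : ℝ) (hε : 0 ≤ ε)
    (hv : v ∈ A y + enl B ε y)
    (herr : ‖lam • v + y - x‖ ^ 2 + 2 * lam * ε ≤ σ ^ 2 * ‖y - x‖ ^ 2) :
    ∀ xs : X, (0:X) ∈ A xs + B xs →
      2 * lam * μ * ‖xs - y‖ ^ 2 + (1 - σ ^ 2) * ‖y - x‖ ^ 2 +
        ‖xs - (x - lam • v)‖ ^ 2 ≤ ‖xs - x‖ ^ 2 := by
  intro xs hxs
  obtain ⟨a, ha, b, hb, rfl⟩ := Set.mem_add.1 hv
  obtain ⟨a', ha', b', hb', hab⟩ := Set.mem_add.1 hxs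
  have h1 := hA ha ha'
  have h2 : -ε ≤ ⟪b - b', y - xs⟫ := hb xs b' hb'
  have h3 : ⟪a - a', y - xs⟫ + ⟪b - b', y - xs⟫ = -⟪xs - y, a + b⟫ := by
    rw [← inner_add_left, show a - a' + (b - b') = (a + b) - (a' + b') by abel, hab, sub_zero,
      real_inner_comm, ← inner_neg_left, neg_sub]
  rw [norm_sub_rev y xs] at h1
  have e1 : ‖xs - x‖ ^ 2 = ‖xs - y‖ ^ 2 + 2 * ⟪xs - y, y - x⟫ + ‖y - x‖ ^ 2 := by
    rw [← norm_add_sq_real]; congr 2; abel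
  have e2 : ‖xs - (x - lam • (a + b))‖ ^ 2 = ‖xs - y‖ ^ 2
      + 2 * ⟪xs - y, lam • (a + b) + y - x⟫ + ‖lam • (a + b) + y - x‖ ^ 2 := by
    rw [← norm_add_sq_real]; congr 2; abel
  have e3 : ⟪xs - y, lam • (a + b) + y - x⟫ = lam * ⟪xs - y, a + b⟫ + ⟪xs - y, y - x⟫ := by
    rw [add_sub_assoc, inner_add_right, real_inner_smul_right]
  have h4 : μ * ‖xs - y‖ ^ 2 - ε ≤ -⟪xs - y, a + b⟫ := by linarith
  have h5 := mul_le_mul_of_nonneg_left h4 hlam.le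
  rw [e2, e3, e1]
  linarith
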